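/- Let A ∈ ℚ^{m×n} be a matrix of full column rank defining a parametric polyhedron P of finite lattice width, and let Q ⊆ ℝ^m be a rational partially open polyhedron such that P_b is nonempty for all b ∈ Q. Then there exist a finite partition of Q into rational partially open polyhedra Q₁, …, Q_t and, for each i, a triple (F_i, G_i, c_i) of rational linear maps F_i, G_i : ℝ^m → ℝⁿ and a nonzero integral row vector c_i ∈ ℤⁿ such that for every b ∈ Q_i: min{c_i·x : x ∈ P_b} = c_i G_i b, max{c_i·x : x ∈ P_b} = c_i F_i b, and w(P_b) = w_{c_i}(P_b) = c_i (F_i − G_i) b. -/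

import Mathlib

open Matrix Set

noncomputable def widthAlong {n : ℕ} (K : Set (Fin n → ℝ)) (c : Fin n → ℝ) : EReal :=
  sSup ((fun x => ((∑ i, c i * x i : ℝ) : EReal)) '' K) -
    sInf ((fun x => ((∑ i, c i * x i : ℝ) : EReal)) '' K)

noncomputable def latticeWidth {n : ℕ} (K : Set (Fin n → ℝ)) : EReal :=
  sInf {w : EReal | ∃ c : Fin n → ℤ, c ≠ 0 ∧ w = widthAlong K (fun i => (c i : ℝ))}

def Pb {m n : ℕ} (A : Matrix (Fin m) (Fin n) ℚ) (b : Fin m → ℝ) : Set (Fin n → ℝ) :=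
  {x | ∀ i, (∑ j, (A i j : ℝ) * x j) ≤ b i}

/-- A rational partially open polyhedron: an intersection of finitely many closed or
open halfspaces with rational data. -/
def IsRatPOPolyhedron {d : ℕ} (S : Set (Fin d → ℝ)) : Prop :=
  ∃ (k : ℕ) (a : Fin k → Fin d → ℚ) (β : Fin k → ℚ) (strict : Fin k → Bool),
    S = {x | ∀ i, if strict i then (∑ j, (a i j : ℝ) * x j) < (β i : ℝ)
                  else (∑ j, (a i j : ℝ) * x j) ≤ (β i : ℝ)}

def applyRat {m n : ℕ} (F : Matrix (Fin n) (Fin m) ℚ) (b : Fin m → ℝ) : Fin n → ℝ :=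
  (F.map ((↑) : ℚ → ℝ)).mulVec b

/-!
By linear programming duality the width of `P_b` along `c` is `(y + z) · b`, where `y` and `z` are
optimal dual solutions for the objectives `c` and `-c`. They can be chosen with linearly independent
supporting rows of `A`, and since `c` is integral such solutions have a common denominator `D` that
depends on `A` only. So every finite width is `w · b / D` for a vector `w ∈ ℕᵐ` in a fixed set `W`,
and conversely, by weak duality, each `w ∈ W` bounds the width along some nonzero `c`.

The vectors in `W` satisfy `w A = 0`, so `w · b = w · (b - A x)` for any `x ∈ P_b`, which makes
`w ↦ w · b` monotone. Hence only the minimal elements of `W` matter, and there are finitely many of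
them by Dickson's lemma. The cells are the regions of `Q` on which one of these finitely many linear
forms is the smallest; there both dual solutions must be optimal, and `c G b` and `c F b` are their
values.
-/

section ConicCaratheodory

variable {𝕜 E ι : Type*} [Field 𝕜] [LinearOrder 𝕜] [IsStrictOrderedRing 𝕜]
  [AddCommGroup E] [Module 𝕜 E]

theorem exists_nonneg_sub_smul_support_ssubset [Finite ι] {y u : ι → 𝕜} (hy : 0 ≤ y)
    (hu : Function.support u ⊆ Function.support y) (hpos : ∃ i, 0 < u i) :
    ∃ t : 𝕜, 0 ≤ y - t • u ∧ Function.support (y - t • u) ⊂ Function.support y := by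
  obtain ⟨i₀, hi₀, hmin⟩ := exists_min_image {i | 0 < u i} (fun i => y i / u i) (toFinite _) hpos
  have hi₀ : 0 < u i₀ := hi₀
  have hratio : 0 ≤ y i₀ / u i₀ := div_nonneg (hy i₀) hi₀.le
  refine ⟨y i₀ / u i₀, fun i => ?_, ssubset_iff_exists.2 ⟨fun i hi => ?_, i₀, hu hi₀.ne', ?_⟩⟩
  · rcases lt_or_ge 0 (u i) with hi | hi
    · simpa using (le_div_iff₀ hi).1 (hmin i hi)
    · simpa using (mul_nonpos_of_nonneg_of_nonpos hratio hi).trans (hy i)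
  · contrapose! hi
    have : u i = 0 := by simpa using mt (@hu i) hi
    simp_all
  · simp [hi₀.ne']

theorem exists_nonneg_linearIndepOn_support [Fintype ι] (v : ι → E) {y : ι → 𝕜} (hy : 0 ≤ y) :
    ∃ z : ι → 𝕜, 0 ≤ z ∧ Function.support z ⊆ Function.support y ∧
      ∑ i, z i • v i = ∑ i, y i • v i ∧ LinearIndepOn 𝕜 v (Function.support z) := by
  obtain ⟨z, ⟨hz, hzy, hsum⟩, hmin⟩ := exists_minimalFor_of_wellFoundedLT
    (fun z : ι → 𝕜 => 0 ≤ z ∧ Function.support z ⊆ Function.support y ∧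
      ∑ i, z i • v i = ∑ i, y i • v i) Function.support ⟨y, hy, subset_rfl, rfl⟩
  have hnonpos : ∀ u : ι → 𝕜, Function.support u ⊆ Function.support z →
      ∑ i, u i • v i = 0 → u ≤ 0 := by
    intro u hu hu₀
    by_contra! hneg
    obtain ⟨t, ht, hlt⟩ := exists_nonneg_sub_smul_support_ssubset hz hu
      (by simpa [Pi.le_def] using hneg)
    refine hlt.not_subset (hmin ⟨ht, hlt.subset.trans hzy, ?_⟩ hlt.subset)
    simp [sub_smul, mul_smul, ← Finset.smul_sum, hu₀, hsum]
  refine ⟨z, hz, hzy, hsum, linearIndepOn_iff.2 fun u hu hu₀ => ?_⟩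
  rw [Finsupp.mem_supported, ← Finsupp.fun_support_eq] at hu
  rw [Finsupp.linearCombination_apply, Finsupp.sum_fintype _ _ (by simp)] at hu₀
  exact DFunLike.coe_injective ((hnonpos u hu hu₀).antisymm <| neg_nonpos.1 <|
    hnonpos (-u) (by simpa using hu) (by simp [hu₀]))

end ConicCaratheodory

section Farkas

theorem mem_hull_range_iff_exists_nonneg {ι R E : Type*} [Fintype ι] [Semiring R] [PartialOrder R]
    [IsOrderedRing R] [AddCommMonoid E] [Module R E] {v : ι → E} {x : E} :
    x ∈ PointedCone.hull R (range v) ↔ ∃ y : ι → R, 0 ≤ y ∧ ∑ i, y i • v i = x := by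
  rw [PointedCone.hull, Submodule.mem_span_range_iff_exists_fun]
  exact ⟨fun ⟨y, hy⟩ => ⟨fun i => y i, fun i => (y i).2, hy⟩,
    fun ⟨y, hy, hyx⟩ => ⟨fun i => ⟨y i, hy i⟩, hyx⟩⟩

variable {ι κ E : Type*} [AddCommGroup E] [Module ℝ E] [TopologicalSpace E]
  [IsTopologicalAddGroup E] [ContinuousSMul ℝ E] [T2Space E]

theorem isClosed_hull_range_of_linearIndependent [Finite ι] {v : ι → E}
    (hv : LinearIndependent ℝ v) : IsClosed (PointedCone.hull ℝ (range v) : Set E) := by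
  have := Fintype.ofFinite ι
  have himage : (PointedCone.hull ℝ (range v) : Set E) =
      Fintype.linearCombination ℝ v '' Ici 0 := by
    ext x
    exact mem_hull_range_iff_exists_nonneg
  rw [himage]
  exact (LinearMap.isClosedEmbedding_of_injective <| LinearMap.ker_eq_bot.2 <|
    linearIndependent_iff_injective_fintypeLinearCombination.1 hv).isClosedMap _ isClosed_Ici

theorem isClosed_hull_range [Finite ι] (v : ι → E) :
    IsClosed (PointedCone.hull ℝ (range v) : Set E) := by
  have := Fintype.ofFinite ι
  have hUnion : (PointedCone.hull ℝ (range v) : Set E) =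
      ⋃ S : {S : Set ι // LinearIndepOn ℝ v S}, PointedCone.hull ℝ (v '' S) := by
    refine subset_antisymm (fun x hx => ?_) <| iUnion_subset fun S =>
      Submodule.span_mono (image_subset_range v S)
    obtain ⟨y, hy, rfl⟩ := mem_hull_range_iff_exists_nonneg.1 hx
    obtain ⟨z, hz, -, hsum, hli⟩ := exists_nonneg_linearIndepOn_support v hy
    refine mem_iUnion.2 ⟨⟨_, hli⟩, hsum ▸ sum_mem fun i _ => ?_⟩
    by_cases hi : z i = 0
    · simp [hi]
    · exact (PointedCone.hull ℝ _).smul_mem (hz i)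
        (PointedCone.subset_hull ⟨i, hi, rfl⟩)
  rw [hUnion]
  refine isClosed_iUnion_of_finite fun S => ?_
  rw [image_eq_range]
  exact isClosed_hull_range_of_linearIndependent S.2

theorem exists_nonneg_vecMul_eq [Fintype ι] [Fintype κ] {M : Matrix ι κ ℝ} {c : κ → ℝ}
    (h : ∀ x, 0 ≤ M *ᵥ x → 0 ≤ c ⬝ᵥ x) : ∃ y, 0 ≤ y ∧ y ᵥ* M = c := by
  classical
  by_contra! hc
  let C : ProperCone ℝ (κ → ℝ) := ⟨PointedCone.hull ℝ (range M.row), isClosed_hull_range M.row⟩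
  have hcC : c ∉ C := fun hmem => by
    obtain ⟨y, hy, hyc⟩ := mem_hull_range_iff_exists_nonneg.1 hmem
    exact hc y hy (by rw [vecMul_eq_sum]; exact hyc)
  obtain ⟨f, hf, hfc⟩ := C.hyperplane_separation_point hcC
  have hfx : ∀ u, f u = u ⬝ᵥ fun j => f fun k => if j = k then 1 else 0 :=
    f.toLinearMap.pi_apply_eq_sum_univ
  refine hfc.not_ge ?_
  rw [hfx]
  exact h _ fun i => (hf _ (PointedCone.subset_hull ⟨i, rfl⟩)).trans_eq (hfx _)

end Farkas

section LinearProgramming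

variable {ι κ : Type*} [Fintype κ] {B : Matrix ι κ ℝ} {b : ι → ℝ} {c : κ → ℝ}

theorem dotProduct_le_of_vecMul_eq [Fintype ι] {x : κ → ℝ} {y : ι → ℝ} (hx : B *ᵥ x ≤ b)
    (hy : 0 ≤ y) (hyc : y ᵥ* B = c) : c ⬝ᵥ x ≤ y ⬝ᵥ b := by
  rw [← hyc, ← dotProduct_mulVec]
  exact dotProduct_le_dotProduct_of_nonneg_left hx hy

theorem exists_nonneg_vecMul_add_smul_eq [Fintype ι] {r : κ → ℝ} {ρ γ : ℝ}
    (h : ∀ (x : κ → ℝ) (t : ℝ), B *ᵥ x ≤ t • b → r ⬝ᵥ x ≤ t * ρ → c ⬝ᵥ x ≤ t * γ) :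
    ∃ (y : ι → ℝ) (s : ℝ), 0 ≤ y ∧ 0 ≤ s ∧ y ᵥ* B + s • r = c ∧ y ⬝ᵥ b + s * ρ = γ := by
  -- Farkas' lemma for the homogenized system, whose unknowns are `x` and `t`.
  let M := fromBlocks (-B) (replicateCol Unit b) (replicateRow Unit (-r)) (of fun _ _ => ρ)
  have hmulVec : ∀ x, M *ᵥ x = Sum.elim (x (Sum.inr ()) • b - B *ᵥ (x ∘ Sum.inl))
      fun _ => x (Sum.inr ()) * ρ - r ⬝ᵥ (x ∘ Sum.inl) := fun x => by
    rw [fromBlocks_mulVec]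
    ext (i | i) <;> simp [mulVec, dotProduct, mul_comm, neg_add_eq_sub]
  have hvecMul : ∀ y, y ᵥ* M = Sum.elim (-((y ∘ Sum.inl) ᵥ* B + y (Sum.inr ()) • r))
      fun _ => (y ∘ Sum.inl) ⬝ᵥ b + y (Sum.inr ()) * ρ := fun y => by
    rw [vecMul_fromBlocks]
    ext (j | j) <;> simp [vecMul, dotProduct, add_comm]
  obtain ⟨y, hy, hyM⟩ := exists_nonneg_vecMul_eq (M := M) (c := Sum.elim (-c) fun _ => γ) <| by
    intro x hx
    rw [hmulVec] at hx
    have := h (x ∘ Sum.inl) (x (Sum.inr ())) (fun i => sub_nonneg.1 (hx (Sum.inl i)))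
      (sub_nonneg.1 (hx (Sum.inr ())))
    simpa [dotProduct, mul_comm γ] using this
  rw [hvecMul, Sum.elim_eq_iff, neg_inj] at hyM
  exact ⟨y ∘ Sum.inl, y (Sum.inr ()), fun i => hy _, hy _, hyM.1, congrFun hyM.2 ()⟩

theorem exists_nonneg_vecMul_eq_dotProduct_le [Fintype ι] {δ : ℝ} (hne : ∃ x, B *ᵥ x ≤ b)
    (hδ : ∀ x, B *ᵥ x ≤ b → c ⬝ᵥ x ≤ δ) : ∃ y, 0 ≤ y ∧ y ᵥ* B = c ∧ y ⬝ᵥ b ≤ δ := by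
  obtain ⟨x₀, hx₀⟩ := hne
  have hhom : ∀ x : κ → ℝ, ∀ t : ℝ, 0 ≤ t → B *ᵥ x ≤ t • b → c ⬝ᵥ x ≤ t * δ := by
    intro x t ht hx
    by_contra! hlt
    -- Let `s → ∞` in the feasible points `(x₀ + s • x) / (1 + s * t)`; this also covers `t = 0`.
    have hray : ∀ s : ℝ, 0 ≤ s → c ⬝ᵥ x₀ + s * (c ⬝ᵥ x) ≤ (1 + s * t) * δ := by
      intro s hs
      have hpos : 0 < 1 + s * t := by positivity
      have hfeas : B *ᵥ ((1 + s * t)⁻¹ • (x₀ + s • x)) ≤ b := by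
        rw [mulVec_smul, inv_smul_le_iff_of_pos hpos, mulVec_add, mulVec_smul, add_smul, one_smul,
          mul_smul]
        gcongr
      have := hδ _ hfeas
      rwa [dotProduct_smul, smul_eq_mul, inv_mul_le_iff₀ hpos, dotProduct_add, dotProduct_smul,
        smul_eq_mul] at this
    have hgap : 0 < c ⬝ᵥ x - t * δ := sub_pos.2 hlt
    obtain ⟨s, hs⟩ := exists_nat_gt ((δ - c ⬝ᵥ x₀) / (c ⬝ᵥ x - t * δ))
    rw [div_lt_iff₀ hgap] at hs
    linarith [hray s s.cast_nonneg]
  obtain ⟨y, s, hy, hs, hyc, hyb⟩ := exists_nonneg_vecMul_add_smul_eq (B := B) (b := b) (c := c)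
    (r := 0) (ρ := 1) (γ := δ) fun x t hx ht => hhom x t (by simpa using ht) hx
  exact ⟨y, hy, by simpa using hyc, by linarith⟩

theorem exists_forall_dotProduct_le [Finite ι] {δ : ℝ} (hne : ∃ x, B *ᵥ x ≤ b)
    (hδ : ∀ x, B *ᵥ x ≤ b → c ⬝ᵥ x ≤ δ) :
    ∃ x, B *ᵥ x ≤ b ∧ ∀ x', B *ᵥ x' ≤ b → c ⬝ᵥ x' ≤ c ⬝ᵥ x := by
  have := Fintype.ofFinite ι
  have hlub : IsLUB ((c ⬝ᵥ ·) '' {x | B *ᵥ x ≤ b}) (sSup ((c ⬝ᵥ ·) '' {x | B *ᵥ x ≤ b})) :=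
    isLUB_csSup (Nonempty.image _ hne) ⟨δ, forall_mem_image.2 hδ⟩
  generalize sSup ((c ⬝ᵥ ·) '' {x | B *ᵥ x ≤ b}) = M at hlub
  by_contra! hmax
  have hlt : ∀ x, B *ᵥ x ≤ b → c ⬝ᵥ x < M := fun x hx =>
    let ⟨x', hx', hlt⟩ := hmax x hx
    hlt.trans_le (hlub.1 ⟨x', hx', rfl⟩)
  -- A certificate that `c ⬝ᵥ x ≥ M` is infeasible keeps `c ⬝ᵥ x` away from its supremum `M`.
  obtain ⟨y, s, hy, hs, hyc, hyb⟩ : ∃ (y : ι → ℝ) (s : ℝ), 0 ≤ y ∧ 0 ≤ s ∧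
      y ᵥ* B + s • (-c) = 0 ∧ y ⬝ᵥ b + s * -M = -1 := by
    refine exists_nonneg_vecMul_add_smul_eq fun x t hx ht => ?_
    rw [zero_dotProduct, mul_neg_one, neg_nonneg]
    by_contra! hpos
    have := hlt (t⁻¹ • x) (by rwa [mulVec_smul, inv_smul_le_iff_of_pos hpos])
    rw [dotProduct_smul, smul_eq_mul, inv_mul_lt_iff₀ hpos] at this
    rw [neg_dotProduct] at ht
    linarith
  have hgap : ∀ x, B *ᵥ x ≤ b → 1 ≤ s * (M - c ⬝ᵥ x) := by
    intro x hx
    have := dotProduct_le_of_vecMul_eq hx hy (add_neg_eq_zero.1 (by simpa using hyc))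
    rw [smul_dotProduct, smul_eq_mul] at this
    linarith
  have hs : 0 < s := hs.lt_of_ne' <| by
    rintro rfl
    obtain ⟨x, hx⟩ := hne
    linarith [hgap x hx]
  have : M ≤ M - s⁻¹ := hlub.2 <| forall_mem_image.2 fun x hx => by
    have := (inv_le_iff_one_le_mul₀' hs).2 (hgap x hx)
    linarith
  linarith [inv_pos.2 hs]

theorem exists_dual_optimal_linearIndepOn [Fintype ι] {δ : ℝ} (hne : ∃ x, B *ᵥ x ≤ b)
    (hδ : ∀ x, B *ᵥ x ≤ b → c ⬝ᵥ x ≤ δ) :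
    ∃ x y, B *ᵥ x ≤ b ∧ 0 ≤ y ∧ y ᵥ* B = c ∧ y ⬝ᵥ b = c ⬝ᵥ x ∧
      LinearIndepOn ℝ B.row (Function.support y) := by
  obtain ⟨x, hx, hmax⟩ := exists_forall_dotProduct_le hne hδ
  obtain ⟨y, hy, hyc, hyb⟩ := exists_nonneg_vecMul_eq_dotProduct_le ⟨x, hx⟩ hmax
  obtain ⟨z, hz, hzy, hsum, hli⟩ := exists_nonneg_linearIndepOn_support B.row hy
  have hzc : z ᵥ* B = c := by
    rw [← hyc, vecMul_eq_sum, vecMul_eq_sum]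
    exact hsum
  have hslack : ∀ i, y i * (b - B *ᵥ x) i = 0 := by
    have hnonneg : ∀ i, 0 ≤ y i * (b - B *ᵥ x) i := fun i => mul_nonneg (hy i) (sub_nonneg.2 hx i)
    have hzero : y ⬝ᵥ (b - B *ᵥ x) = 0 := by
      refine le_antisymm ?_ (Finset.sum_nonneg fun i _ => hnonneg i)
      rw [dotProduct_sub, dotProduct_mulVec, hyc]
      linarith
    simpa using (Finset.sum_eq_zero_iff_of_nonneg fun i _ => hnonneg i).1 hzero
  have hzb : z ⬝ᵥ (b - B *ᵥ x) = 0 := Finset.sum_eq_zero fun i _ => by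
    by_cases hi : y i = 0
    · simp [show z i = 0 by simpa using mt (@hzy i) (by simpa using hi)]
    · simp [(mul_eq_zero.1 (hslack i)).resolve_left hi]
  refine ⟨x, z, hx, hz, hzc, ?_, hli⟩
  rw [← hzc, ← dotProduct_mulVec]
  simpa [sub_eq_zero, dotProduct_sub] using hzb

end LinearProgramming

section Denominators

variable {ι κ : Type*}

theorem exists_eqOn_mulVec_of_linearIndepOn {K : Type*} [Field K] [Fintype κ]
    {A : Matrix ι κ K} {S : Set ι} (hS : LinearIndepOn K A.row S) (w : ι → K) :
    ∃ r, EqOn (A *ᵥ r) w S := by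
  classical
  obtain ⟨g, hg⟩ := LinearMap.exists_leftInverse_of_injective _ (linearIndependent_iff_ker.1 hS)
  let f : (κ → K) →ₗ[K] K := Finsupp.linearCombination K (fun i : S => w i) ∘ₗ g
  have hf : ∀ i : S, f (A i) = w i := fun i => by
    have hgi : g (A i) = Finsupp.single i 1 := by
      simpa [row] using LinearMap.congr_fun hg (Finsupp.single i 1)
    simp [f, hgi]
  exact ⟨fun j => f fun k => if j = k then 1 else 0,
    fun i hi => (f.pi_apply_eq_sum_univ _).symm.trans (hf ⟨i, hi⟩)⟩

theorem exists_pos_forall_mul_eq_intCast [Finite ι] (q : ι → ℚ) :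
    ∃ D : ℕ, 0 < D ∧ ∀ i, ∃ k : ℤ, D * q i = k := by
  have := Fintype.ofFinite ι
  refine ⟨∏ i, (q i).den, Finset.prod_pos fun i _ => (q i).den_pos, fun i => ?_⟩
  obtain ⟨e, he⟩ := Finset.dvd_prod_of_mem (fun i => (q i).den) (Finset.mem_univ i)
  refine ⟨e * (q i).num, ?_⟩
  rw [he]
  push_cast
  rw [mul_right_comm, Rat.den_mul_eq_num, mul_comm]

theorem linearIndepOn_row_map_ratCast_iff [Finite κ] {A : Matrix ι κ ℚ} {S : Set ι} :
    LinearIndepOn ℝ (A.map (Rat.cast : ℚ → ℝ)).row S ↔ LinearIndepOn ℚ A.row S :=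
  linearIndependent_algebraMap_comp_iff (v := fun i : S => A i)

theorem exists_denominator_of_linearIndepOn_support [Fintype ι] [Finite κ] (A : Matrix ι κ ℚ) :
    ∃ D : ℕ, 0 < D ∧ ∀ (c : κ → ℤ) (y : ι → ℝ),
      LinearIndepOn ℝ (A.map (Rat.cast : ℚ → ℝ)).row (Function.support y) →
      y ᵥ* A.map (Rat.cast : ℚ → ℝ) = (fun j => (c j : ℝ)) → ∀ i, ∃ k : ℤ, D * y i = k := by
  classical
  have := Fintype.ofFinite κ
  choose r hr using fun S : {S // LinearIndepOn ℚ A.row S} => fun i : ι =>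
    exists_eqOn_mulVec_of_linearIndepOn S.2 (Pi.single i 1)
  obtain ⟨D, hD, hint⟩ := exists_pos_forall_mul_eq_intCast
    fun p : {S // LinearIndepOn ℚ A.row S} × ι × κ => r p.1 p.2.1 p.2.2
  choose k hk using hint
  refine ⟨D, hD, fun c y hli hyc i => ?_⟩
  let S : {S // LinearIndepOn ℚ A.row S} :=
    ⟨Function.support y, linearIndepOn_row_map_ratCast_iff.1 hli⟩
  have hyi : y i = ∑ j, (c j : ℝ) * (r S i j : ℝ) := by
    have hr' : ∀ l ∈ Function.support y,
        (A.map Rat.cast *ᵥ fun j => (r S i j : ℝ)) l = (Pi.single i 1 : ι → ℝ) l := fun l hl => by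
      simpa only [mulVec, dotProduct, map_apply, Pi.single_apply, Rat.cast_sum, Rat.cast_mul,
        apply_ite (Rat.cast : ℚ → ℝ), Rat.cast_one, Rat.cast_zero]
        using congrArg (Rat.cast : ℚ → ℝ) (hr S i hl)
    calc y i = y ⬝ᵥ Pi.single i 1 := (dotProduct_single_one y i).symm
      _ = y ⬝ᵥ (A.map Rat.cast *ᵥ fun j => (r S i j : ℝ)) :=
          Finset.sum_congr rfl fun l _ => by
            by_cases hl : y l = 0
            · simp [hl]
            · rw [hr' l hl]
      _ = ∑ j, (c j : ℝ) * (r S i j : ℝ) := by rw [dotProduct_mulVec, hyc, dotProduct]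
  refine ⟨∑ j, c j * k (S, i, j), ?_⟩
  rw [hyi, Finset.mul_sum]
  push_cast
  refine Finset.sum_congr rfl fun j _ => ?_
  have : (D : ℝ) * (r S i j : ℝ) = k (S, i, j) := mod_cast hk (S, i, j)
  rw [← this]
  ring

end Denominators

section FirstMinimizer

variable {X α ι : Type*} [LinearOrder α] [LinearOrder ι]

/-- The points at which `f k` is the smallest of the values `f j`, with ties broken in favour of
the smallest index; these regions subdivide `X`. -/
def firstMinimizerRegion (f : ι → X → α) (k : ι) : Set X :=
  {x | ∀ j, if j < k then f k x < f j x else f k x ≤ f j x}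

theorem le_of_mem_firstMinimizerRegion {f : ι → X → α} {k : ι} {x : X}
    (hx : x ∈ firstMinimizerRegion f k) (j : ι) : f k x ≤ f j x := by
  have := hx j
  split_ifs at this
  exacts [this.le, this]

theorem pairwise_disjoint_firstMinimizerRegion (f : ι → X → α) :
    Pairwise (Function.onFun Disjoint (firstMinimizerRegion f)) := by
  have hlt : ∀ {j k x}, j < k → x ∈ firstMinimizerRegion f j → x ∉ firstMinimizerRegion f k :=
    fun {j k _} hjk hj hk => (if_pos hjk ▸ hk j).not_ge (le_of_mem_firstMinimizerRegion hj k)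
  refine fun j k hjk => disjoint_left.2 fun x hj hk => ?_
  rcases hjk.lt_or_gt with h | h
  exacts [hlt h hj hk, hlt h hk hj]

theorem iUnion_firstMinimizerRegion [Finite ι] [Nonempty ι] (f : ι → X → α) :
    ⋃ k, firstMinimizerRegion f k = univ := by
  refine eq_univ_of_forall fun x => mem_iUnion.2 ?_
  obtain ⟨k, hk, hfirst⟩ := exists_min_image {k | ∀ j, f k x ≤ f j x} id (toFinite _)
    (Finite.exists_min fun k => f k x)
  refine ⟨k, fun j => ?_⟩
  split_ifs with hjk
  · by_contra! hle
    exact hjk.not_ge (hfirst j fun l => hle.trans (hk l))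
  · exact hk j

end FirstMinimizer

section RationalPolyhedra

variable {d : ℕ}

theorem IsRatPOPolyhedron.inter {S T : Set (Fin d → ℝ)} (hS : IsRatPOPolyhedron S)
    (hT : IsRatPOPolyhedron T) : IsRatPOPolyhedron (S ∩ T) := by
  obtain ⟨k, a, β, strict, rfl⟩ := hS
  obtain ⟨l, a', β', strict', rfl⟩ := hT
  refine ⟨k + l, Fin.append a a', Fin.append β β', Fin.append strict strict', ?_⟩
  ext x
  simp [Fin.forall_fin_add]

theorem isRatPOPolyhedron_firstMinimizerRegion {t : ℕ} (a : Fin t → Fin d → ℚ) (k : Fin t) :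
    IsRatPOPolyhedron (firstMinimizerRegion (fun j x => (fun q => (a j q : ℝ)) ⬝ᵥ x) k) := by
  refine ⟨t, fun j => a k - a j, 0, fun j => decide (j < k), ?_⟩
  ext x
  simp [firstMinimizerRegion, dotProduct, sub_mul]

end RationalPolyhedra

section Width

variable {n : ℕ} {K : Set (Fin n → ℝ)} {c : Fin n → ℝ}

/-- The set of values of the linear functional `c` on `K`. -/
def linearValues (K : Set (Fin n → ℝ)) (c : Fin n → ℝ) : Set ℝ :=
  {r | ∃ x ∈ K, r = c ⬝ᵥ x}

open Pointwise in
theorem linearValues_intCast_neg (c : Fin n → ℤ) :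
    linearValues K (fun j => ((-c) j : ℝ)) = -linearValues K fun j => (c j : ℝ) := by
  ext r
  simp [linearValues, dotProduct, neg_eq_iff_eq_neg]

theorem widthAlong_eq_coe_sub {l u : ℝ} (hl : IsLeast (linearValues K c) l)
    (hu : IsGreatest (linearValues K c) u) : widthAlong K c = ((u - l : ℝ) : EReal) := by
  have himage : (fun x => ((∑ i, c i * x i : ℝ) : EReal)) '' K =
      Real.toEReal '' linearValues K c := by
    ext r
    simp [linearValues, dotProduct]
  rw [widthAlong, himage, (EReal.coe_strictMono.monotone.map_isGreatest hu).csSup_eq,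
    (EReal.coe_strictMono.monotone.map_isLeast hl).csInf_eq, EReal.coe_sub]

theorem coe_dotProduct_sub_le_widthAlong {x x' : Fin n → ℝ} (hx : x ∈ K) (hx' : x' ∈ K) :
    ((c ⬝ᵥ x - c ⬝ᵥ x' : ℝ) : EReal) ≤ widthAlong K c := by
  rw [EReal.coe_sub]
  exact EReal.sub_le_sub (le_sSup ⟨x, hx, rfl⟩) (sInf_le ⟨x', hx', rfl⟩)

theorem bddAbove_linearValues_of_widthAlong_ne_top (hK : K.Nonempty) (h : widthAlong K c ≠ ⊤) :
    BddAbove (linearValues K c) := by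
  obtain ⟨x₀, hx₀⟩ := hK
  refine ⟨c ⬝ᵥ x₀ + (widthAlong K c).toReal, ?_⟩
  rintro _ ⟨x, hx, rfl⟩
  have := (coe_dotProduct_sub_le_widthAlong (c := c) hx hx₀).trans (EReal.le_coe_toReal h)
  linarith [EReal.coe_le_coe_iff.1 this]

theorem bddBelow_linearValues_of_widthAlong_ne_top (hK : K.Nonempty) (h : widthAlong K c ≠ ⊤) :
    BddBelow (linearValues K c) := by
  obtain ⟨x₀, hx₀⟩ := hK
  refine ⟨c ⬝ᵥ x₀ - (widthAlong K c).toReal, ?_⟩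
  rintro _ ⟨x, hx, rfl⟩
  have := (coe_dotProduct_sub_le_widthAlong (c := c) hx₀ hx).trans (EReal.le_coe_toReal h)
  linarith [EReal.coe_le_coe_iff.1 this]

theorem exists_widthAlong_ne_top (h : latticeWidth K ≠ ⊤) :
    ∃ c : Fin n → ℤ, c ≠ 0 ∧ widthAlong K (fun j => (c j : ℝ)) ≠ ⊤ := by
  contrapose! h
  refine sInf_eq_top.2 ?_
  rintro _ ⟨c, hc, rfl⟩
  exact h c hc

end Width

section WidthBounds

variable {m n : ℕ} {A : Matrix (Fin m) (Fin n) ℚ} {D : ℕ} {b : Fin m → ℝ} {c : Fin n → ℤ}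
  {y z w w' : Fin m → ℕ}

/-- The value of the dual vector `y / D` at the right-hand side `b`. -/
noncomputable def dualValue (D : ℕ) (y : Fin m → ℕ) (b : Fin m → ℝ) : ℝ :=
  (fun i => (y i : ℝ)) ⬝ᵥ b / D

theorem dualValue_add (y z : Fin m → ℕ) :
    dualValue D (y + z) b = dualValue D y b + dualValue D z b := by
  simp [dualValue, dotProduct, add_mul, Finset.sum_add_distrib, add_div]

theorem dualValue_eq_ratCast_dotProduct :
    dualValue D y b = (fun i => ((y i / D : ℚ) : ℝ)) ⬝ᵥ b := by
  simp [dualValue, dotProduct, Finset.sum_div, mul_div_right_comm]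

/-- `y / D` is feasible for the dual of the linear program maximizing `c` over `Pb A b`. -/
def IsScaledDual (A : Matrix (Fin m) (Fin n) ℚ) (D : ℕ) (c : Fin n → ℤ) (y : Fin m → ℕ) : Prop :=
  (fun i => (y i : ℝ)) ᵥ* A.map (Rat.cast : ℚ → ℝ) = (D : ℝ) • fun j => (c j : ℝ)

namespace IsScaledDual

theorem mem_upperBounds (hy : IsScaledDual A D c y) (hD : 0 < D) :
    dualValue D y b ∈ upperBounds (linearValues (Pb A b) fun j => (c j : ℝ)) := by
  rintro _ ⟨x, hx, rfl⟩
  rw [dualValue, le_div_iff₀' (by positivity), ← smul_eq_mul, ← smul_dotProduct]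
  exact dotProduct_le_of_vecMul_eq hx (fun i => (y i).cast_nonneg) hy

theorem mem_lowerBounds (hz : IsScaledDual A D (-c) z) (hD : 0 < D) :
    -dualValue D z b ∈ lowerBounds (linearValues (Pb A b) fun j => (c j : ℝ)) := by
  have := hz.mem_upperBounds (b := b) hD
  rw [linearValues_intCast_neg] at this
  exact fun r hr => neg_le.1 (this (neg_mem_neg.2 hr))

end IsScaledDual

/-- `w / D` is the sum of dual feasible solutions for `c` and `-c` for some nonzero integral
direction `c`, so that `dualValue D w b` bounds the width of `Pb A b` along `c`. -/
def IsWidthBound (A : Matrix (Fin m) (Fin n) ℚ) (D : ℕ) (w : Fin m → ℕ) : Prop :=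
  ∃ c ≠ 0, ∃ y z, IsScaledDual A D c y ∧ IsScaledDual A D (-c) z ∧ y + z = w

namespace IsWidthBound

theorem vecMul_eq_zero (hw : IsWidthBound A D w) :
    (fun i => (w i : ℝ)) ᵥ* A.map (Rat.cast : ℚ → ℝ) = 0 := by
  obtain ⟨c, -, y, z, hy, hz, rfl⟩ := hw
  have hcast : (fun i => ((y + z) i : ℝ)) = (fun i => (y i : ℝ)) + fun i => (z i : ℝ) := by
    ext
    simp
  rw [hcast, add_vecMul, hy, hz, ← smul_add]
  ext
  simp

theorem dualValue_le_dualValue (hw : IsWidthBound A D w) (hw' : IsWidthBound A D w')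
    (hle : w ≤ w') (hne : (Pb A b).Nonempty) :
    dualValue D w b ≤ dualValue D w' b := by
  obtain ⟨x, hx⟩ := hne
  have := dotProduct_le_of_vecMul_eq (c := 0) hx
    (sub_nonneg.2 fun i => Nat.cast_le.2 (hle i) : 0 ≤ (fun i => (w' i : ℝ)) - fun i => (w i : ℝ))
    (by rw [sub_vecMul, hw.vecMul_eq_zero, hw'.vecMul_eq_zero, sub_zero])
  rw [zero_dotProduct, sub_dotProduct, sub_nonneg] at this
  exact div_le_div_of_nonneg_right this D.cast_nonneg

theorem finite_setOf_minimal : {w | Minimal (IsWidthBound A D) w}.Finite :=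
  WellQuasiOrderedLE.finite_of_isAntichain (setOfPred_minimal_antichain _)

end IsWidthBound

/-- `D` is a common denominator of optimal dual solutions: every bounded linear program over
`Pb A b` with integral objective has one in `ℕᵐ / D`. -/
def IsDualDenominator (A : Matrix (Fin m) (Fin n) ℚ) (D : ℕ) : Prop :=
  0 < D ∧ ∀ (b : Fin m → ℝ) (c : Fin n → ℤ), (Pb A b).Nonempty →
    BddAbove (linearValues (Pb A b) fun j => (c j : ℝ)) → ∃ y, IsScaledDual A D c y ∧
      IsGreatest (linearValues (Pb A b) fun j => (c j : ℝ)) (dualValue D y b)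

theorem exists_isDualDenominator (A : Matrix (Fin m) (Fin n) ℚ) : ∃ D, IsDualDenominator A D := by
  obtain ⟨D, hD, hint⟩ := exists_denominator_of_linearIndepOn_support A
  refine ⟨D, hD, fun b c hne ⟨δ, hδ⟩ => ?_⟩
  obtain ⟨x, y, hx, hy, hyc, hyb, hli⟩ :=
    exists_dual_optimal_linearIndepOn (B := A.map (Rat.cast : ℚ → ℝ)) hne
      fun x hx => hδ ⟨x, hx, rfl⟩
  have hnat : ∀ i, ∃ k : ℕ, (k : ℝ) = D * y i := fun i => by
    obtain ⟨k, hk⟩ := hint c y hli hyc i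
    have hk₀ : 0 ≤ k := by
      rw [← Int.cast_nonneg_iff (R := ℝ), ← hk]
      exact mul_nonneg D.cast_nonneg (hy i)
    lift k to ℕ using hk₀
    exact ⟨k, by simpa using hk.symm⟩
  choose k hk using hnat
  have hky : (fun i => (k i : ℝ)) = (D : ℝ) • y := funext hk
  have hdual : IsScaledDual A D c k := by rw [IsScaledDual, hky, smul_vecMul, hyc]
  refine ⟨k, hdual, ⟨x, hx, ?_⟩, hdual.mem_upperBounds hD⟩
  rw [dualValue, hky, smul_dotProduct, smul_eq_mul, mul_div_cancel_left₀ _ (by positivity), hyb]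

namespace IsDualDenominator

theorem exists_isLeast (hD : IsDualDenominator A D) (hne : (Pb A b).Nonempty)
    (hbdd : BddBelow (linearValues (Pb A b) fun j => (c j : ℝ))) :
    ∃ z, IsScaledDual A D (-c) z ∧
      IsLeast (linearValues (Pb A b) fun j => (c j : ℝ)) (-dualValue D z b) := by
  obtain ⟨z, hz, hmax, -⟩ := hD.2 b (-c) hne (by rw [linearValues_intCast_neg]; exact hbdd.neg)
  rw [linearValues_intCast_neg] at hmax
  exact ⟨z, hz, hmax, hz.mem_lowerBounds hD.1⟩

theorem exists_isWidthBound_widthAlong_eq (hD : IsDualDenominator A D) (hne : (Pb A b).Nonempty)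
    (hc : c ≠ 0) (hwidth : widthAlong (Pb A b) (fun j => (c j : ℝ)) ≠ ⊤) :
    ∃ w, IsWidthBound A D w ∧ widthAlong (Pb A b) (fun j => (c j : ℝ)) = dualValue D w b := by
  obtain ⟨y, hy, hmax⟩ :=
    hD.2 b c hne (bddAbove_linearValues_of_widthAlong_ne_top hne hwidth)
  obtain ⟨z, hz, hmin⟩ :=
    hD.exists_isLeast hne (bddBelow_linearValues_of_widthAlong_ne_top hne hwidth)
  refine ⟨y + z, ⟨c, hc, y, z, hy, hz, rfl⟩, ?_⟩
  rw [widthAlong_eq_coe_sub hmin hmax, sub_neg_eq_add, dualValue_add]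

theorem exists_isWidthBound (hD : IsDualDenominator A D) (hne : (Pb A b).Nonempty)
    (hfin : latticeWidth (Pb A b) ≠ ⊤) : ∃ w, IsWidthBound A D w := by
  obtain ⟨c, hc, hwidth⟩ := exists_widthAlong_ne_top hfin
  obtain ⟨w, hw, -⟩ := hD.exists_isWidthBound_widthAlong_eq hne hc hwidth
  exact ⟨w, hw⟩

/-- Weak duality forces both halves of an optimal width bound to be tight. -/
theorem isLeast_and_isGreatest (hD : IsDualDenominator A D) (hne : (Pb A b).Nonempty) (hc : c ≠ 0)
    (hy : IsScaledDual A D c y) (hz : IsScaledDual A D (-c) z)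
    (hopt : ∀ w, IsWidthBound A D w → dualValue D (y + z) b ≤ dualValue D w b) :
    IsLeast (linearValues (Pb A b) fun j => (c j : ℝ)) (-dualValue D z b) ∧
      IsGreatest (linearValues (Pb A b) fun j => (c j : ℝ)) (dualValue D y b) := by
  obtain ⟨y', hy', hmax⟩ := hD.2 b c hne ⟨_, hy.mem_upperBounds hD.1⟩
  obtain ⟨z', hz', hmin⟩ := hD.exists_isLeast hne ⟨_, hz.mem_lowerBounds hD.1⟩
  have hyle : dualValue D y' b ≤ dualValue D y b := hy.mem_upperBounds hD.1 hmax.1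
  have hzle : dualValue D z' b ≤ dualValue D z b :=
    neg_le_neg_iff.1 (hz.mem_lowerBounds hD.1 hmin.1)
  have hsum := hopt (y' + z') ⟨c, hc, y', z', hy', hz', rfl⟩
  rw [dualValue_add, dualValue_add] at hsum
  rw [show dualValue D y b = dualValue D y' b by linarith,
    show dualValue D z b = dualValue D z' b by linarith]
  exact ⟨hmin, hmax⟩

theorem latticeWidth_eq_widthAlong (hD : IsDualDenominator A D) (hne : (Pb A b).Nonempty)
    (hc : c ≠ 0) (hy : IsScaledDual A D c y) (hz : IsScaledDual A D (-c) z)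
    (hopt : ∀ w, IsWidthBound A D w → dualValue D (y + z) b ≤ dualValue D w b) :
    latticeWidth (Pb A b) = widthAlong (Pb A b) fun j => (c j : ℝ) := by
  obtain ⟨hmin, hmax⟩ := hD.isLeast_and_isGreatest hne hc hy hz hopt
  refine IsLeast.csInf_eq ⟨⟨c, hc, rfl⟩, ?_⟩
  rintro _ ⟨d, hd, rfl⟩
  by_cases hwidth : widthAlong (Pb A b) (fun j => (d j : ℝ)) = ⊤
  · exact hwidth ▸ le_top
  · obtain ⟨w, hw, hwd⟩ := hD.exists_isWidthBound_widthAlong_eq hne hd hwidth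
    rw [hwd, widthAlong_eq_coe_sub hmin hmax, sub_neg_eq_add, ← dualValue_add]
    exact EReal.coe_le_coe_iff.2 (hopt w hw)

end IsDualDenominator

end WidthBounds

section Partition

variable {m n : ℕ}

theorem exists_vecMul_eq {ι κ K : Type*} [Field K] [Fintype ι] {c : ι → K} (hc : c ≠ 0)
    (v : κ → K) : ∃ F : Matrix ι κ K, c ᵥ* F = v := by
  classical
  obtain ⟨i, hi⟩ := Function.ne_iff.1 hc
  exact ⟨vecMulVec (Pi.single i (c i)⁻¹) v, by simp [vecMul_vecMulVec, mul_inv_cancel₀ hi]⟩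

theorem exists_dotProduct_applyRat_eq {c : Fin n → ℤ} (hc : c ≠ 0) (v : Fin m → ℚ) :
    ∃ F : Matrix (Fin n) (Fin m) ℚ, ∀ b : Fin m → ℝ,
      (fun j => (c j : ℝ)) ⬝ᵥ applyRat F b = (fun i => (v i : ℝ)) ⬝ᵥ b := by
  have hc' : (fun j => (c j : ℚ)) ≠ 0 := fun h => hc (funext fun j => by simpa using congrFun h j)
  obtain ⟨F, hF⟩ := exists_vecMul_eq hc' v
  refine ⟨F, fun b => ?_⟩
  rw [applyRat, dotProduct_mulVec]
  congr 1
  ext i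
  have := congrArg (Rat.cast : ℚ → ℝ) (congrFun hF i)
  simpa [vecMul, dotProduct] using this

theorem exists_fin_isWidthBound_dualValue_le (A : Matrix (Fin m) (Fin n) ℚ) (D : ℕ) :
    ∃ (t : ℕ) (w : Fin t → Fin m → ℕ), (∀ i, IsWidthBound A D (w i)) ∧
      ∀ b, (Pb A b).Nonempty → ∀ w', IsWidthBound A D w' →
        ∃ i, dualValue D (w i) b ≤ dualValue D w' b := by
  obtain ⟨t, w, -, hw⟩ := (IsWidthBound.finite_setOf_minimal (A := A) (D := D)).fin_param
  refine ⟨t, w, fun i => (hw.le (mem_range_self i)).prop, fun b hne w' hw' => ?_⟩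
  obtain ⟨v, hvw', hv⟩ := exists_minimal_le_of_wellFoundedLT _ w' hw'
  obtain ⟨i, rfl⟩ := hw.ge hv
  exact ⟨i, hv.prop.dualValue_le_dualValue hw' hvw' hne⟩

theorem exists_width_linear_pieces (A : Matrix (Fin m) (Fin n) ℚ) :
    ∃ (t : ℕ) (a : Fin t → Fin m → ℚ) (F G : Fin t → Matrix (Fin n) (Fin m) ℚ)
      (c : Fin t → Fin n → ℤ), (∀ i, c i ≠ 0) ∧ ∀ b, (Pb A b).Nonempty →
        (latticeWidth (Pb A b) ≠ ⊤ → Nonempty (Fin t)) ∧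
        ∀ i, (∀ j, (fun q => (a i q : ℝ)) ⬝ᵥ b ≤ (fun q => (a j q : ℝ)) ⬝ᵥ b) →
          IsLeast (linearValues (Pb A b) fun q => (c i q : ℝ))
            ((fun q => (c i q : ℝ)) ⬝ᵥ applyRat (G i) b) ∧
          IsGreatest (linearValues (Pb A b) fun q => (c i q : ℝ))
            ((fun q => (c i q : ℝ)) ⬝ᵥ applyRat (F i) b) ∧
          latticeWidth (Pb A b) = widthAlong (Pb A b) fun q => (c i q : ℝ) := by
  obtain ⟨D, hD⟩ := exists_isDualDenominator A
  obtain ⟨t, w, hw, hmin⟩ := exists_fin_isWidthBound_dualValue_le A D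
  choose c hc y z hy hz hyz using hw
  choose F hF using fun i => exists_dotProduct_applyRat_eq (hc i) fun q => (y i q / D : ℚ)
  choose G hG using fun i => exists_dotProduct_applyRat_eq (hc i) (-fun q => (z i q / D : ℚ))
  refine ⟨t, fun i q => w i q / D, F, G, c, hc, fun b hne => ⟨fun hfin => ?_, fun i hi => ?_⟩⟩
  · obtain ⟨w', hw'⟩ := hD.exists_isWidthBound hne hfin
    exact (hmin b hne w' hw').nonempty
  · have hopt : ∀ w', IsWidthBound A D w' → dualValue D (y i + z i) b ≤ dualValue D w' b := by
      intro w' hw'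
      obtain ⟨j, hj⟩ := hmin b hne w' hw'
      refine le_trans ?_ hj
      rw [hyz, dualValue_eq_ratCast_dotProduct, dualValue_eq_ratCast_dotProduct]
      exact hi j
    have hGz : (fun q => (c i q : ℝ)) ⬝ᵥ applyRat (G i) b = -dualValue D (z i) b := by
      rw [hG, dualValue_eq_ratCast_dotProduct, ← neg_dotProduct]
      simp only [Pi.neg_def, Rat.cast_neg]
    rw [hGz, hF, ← dualValue_eq_ratCast_dotProduct]
    obtain ⟨hleast, hgreatest⟩ := hD.isLeast_and_isGreatest hne (hc i) (hy i) (hz i) hopt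
    exact ⟨hleast, hgreatest, hD.latticeWidth_eq_widthAlong hne (hc i) (hy i) (hz i) hopt⟩

theorem width_direction_partition_general (A : Matrix (Fin m) (Fin n) ℚ)
    (Q : Set (Fin m → ℝ)) (hQ : IsRatPOPolyhedron Q) (hQne : ∀ b ∈ Q, (Pb A b).Nonempty)
    (hfin : ∀ b ∈ Q, latticeWidth (Pb A b) ≠ ⊤) :
    ∃ (t : ℕ) (Qp : Fin t → Set (Fin m → ℝ))
      (F G : Fin t → Matrix (Fin n) (Fin m) ℚ) (c : Fin t → Fin n → ℤ),
      (∀ i, IsRatPOPolyhedron (Qp i)) ∧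
      (⋃ i, Qp i) = Q ∧
      (∀ i j, i ≠ j → Disjoint (Qp i) (Qp j)) ∧
      (∀ i, c i ≠ 0) ∧
      ∀ i, ∀ b ∈ Qp i,
        IsLeast {r : ℝ | ∃ x ∈ Pb A b, r = ∑ q, (c i q : ℝ) * x q}
          (∑ q, (c i q : ℝ) * applyRat (G i) b q) ∧
        IsGreatest {r : ℝ | ∃ x ∈ Pb A b, r = ∑ q, (c i q : ℝ) * x q}
          (∑ q, (c i q : ℝ) * applyRat (F i) b q) ∧
        latticeWidth (Pb A b) = widthAlong (Pb A b) (fun q => (c i q : ℝ)) ∧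
        latticeWidth (Pb A b) =
          ((∑ q, (c i q : ℝ) * (applyRat (F i) b q - applyRat (G i) b q) : ℝ) : EReal) := by
  obtain ⟨t, a, F, G, c, hc, hpieces⟩ := exists_width_linear_pieces A
  let f : Fin t → (Fin m → ℝ) → ℝ := fun j b => (fun q => (a j q : ℝ)) ⬝ᵥ b
  refine ⟨t, fun k => Q ∩ firstMinimizerRegion f k, F, G, c,
    fun k => hQ.inter (isRatPOPolyhedron_firstMinimizerRegion a k), ?_,
    fun j k hjk => (pairwise_disjoint_firstMinimizerRegion f hjk).mono inter_subset_right
      inter_subset_right, hc, fun k b hb => ?_⟩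
  · rw [← inter_iUnion, inter_eq_left]
    intro b hb
    have := (hpieces b (hQne b hb)).1 (hfin b hb)
    exact iUnion_firstMinimizerRegion f ▸ mem_univ b
  · obtain ⟨hleast, hgreatest, hwidth⟩ :=
      (hpieces b (hQne b hb.1)).2 k (le_of_mem_firstMinimizerRegion hb.2)
    refine ⟨hleast, hgreatest, hwidth, ?_⟩
    rw [hwidth, widthAlong_eq_coe_sub hleast hgreatest, ← dotProduct_sub]
    rfl

end Partition

/-- Theorem 3.  Let `A` define a parametric polyhedron of finite
lattice width and let `Q` be a rational partially open polyhedron of right-hand sides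
with `P_b ≠ ∅` for all `b ∈ Q`.  Then `Q` can be partitioned into rational partially
open polyhedra `Q₁, …, Q_t` with associated triples `(Fᵢ, Gᵢ, cᵢ)` such that for every
`b ∈ Qᵢ`: `min {cᵢ·x : x ∈ P_b} = cᵢ Gᵢ b`, `max {cᵢ·x : x ∈ P_b} = cᵢ Fᵢ b` and
`w(P_b) = w_{cᵢ}(P_b) = cᵢ (Fᵢ - Gᵢ) b`. -/
theorem width_direction_partition {m n : ℕ}
    (A : Matrix (Fin m) (Fin n) ℚ) (hrank : A.rank = n)
    (hfin : ∀ b : Fin m → ℝ, (Pb A b).Nonempty → latticeWidth (Pb A b) ≠ ⊤)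
    (Q : Set (Fin m → ℝ)) (hQ : IsRatPOPolyhedron Q)
    (hQne : ∀ b ∈ Q, (Pb A b).Nonempty) :
    ∃ (t : ℕ) (Qp : Fin t → Set (Fin m → ℝ))
      (F G : Fin t → Matrix (Fin n) (Fin m) ℚ) (c : Fin t → Fin n → ℤ),
      (∀ i, IsRatPOPolyhedron (Qp i)) ∧
      (⋃ i, Qp i) = Q ∧
      (∀ i j, i ≠ j → Disjoint (Qp i) (Qp j)) ∧
      (∀ i, c i ≠ 0) ∧
      ∀ i, ∀ b ∈ Qp i,
        IsLeast {r : ℝ | ∃ x ∈ Pb A b, r = ∑ q, (c i q : ℝ) * x q}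
          (∑ q, (c i q : ℝ) * applyRat (G i) b q) ∧
        IsGreatest {r : ℝ | ∃ x ∈ Pb A b, r = ∑ q, (c i q : ℝ) * x q}
          (∑ q, (c i q : ℝ) * applyRat (F i) b q) ∧
        latticeWidth (Pb A b) = widthAlong (Pb A b) (fun q => (c i q : ℝ)) ∧
        latticeWidth (Pb A b) =
          ((∑ q, (c i q : ℝ) * (applyRat (F i) b q - applyRat (G i) b q) : ℝ) : EReal) := by
  exact width_direction_partition_general A Q hQ hQne fun b hb => hfin b (hQne b hb)
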